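/- Let L > 0, let Γ : ℝ² → ℝ be smooth, and suppose smooth functions (m1, m2, n1, n2) satisfy the system ∂ₜm1 + ∂ₓ(Γ m1) − n2 Γ = 0, ∂ₜm2 + ∂ₓ(Γ m2) + n1 Γ = 0, ∂ₜn1 + ∂ₓ(Γ n1) + m2 Γ = 0, ∂ₜn2 + ∂ₓ(Γ n2) − m1 Γ = 0, where Γ, m1, m2, n1, n2 are all L-periodic in x (f(x + L, t) = f(x, t) for all x, t) and P = m1 n1 + m2 n2 > 0 everywhere. Then the quantity ρ₀(t) = ∫₀ᴸ √(m1 n1 + m2 n2)(x, t) dx is independent of t. -/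

import Mathlib

/-!
A density of weight `k` is transported by the velocity field `Γ` when
`∂ₜ f + Γ ∂ₓ f + k (∂ₓ Γ) f = 0`. The system says that `m1, m2, n1, n2` are densities of weight `1`
up to source terms. Weights add under multiplication, so `P = m1 n1 + m2 n2` has weight `2`, and the
sources `±n1 n2 Γ`, `±m1 m2 Γ` cancel in it. Square roots halve the weight, so `√P` has weight `1`,
that is, `∂ₜ √P + ∂ₓ (Γ √P) = 0`. The divergence theorem for `(Γ √P, √P)` on the rectangle
`[0, L] × [t1, t2]` finishes the proof, since by periodicity the fluxes through `x = 0` and `x = L`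
cancel.
-/

/-- Partial derivative with respect to the first (space) variable. -/
noncomputable def pX (f : ℝ × ℝ → ℝ) : ℝ × ℝ → ℝ :=
  fun p => deriv (fun x => f (x, p.2)) p.1

/-- Partial derivative with respect to the second (time) variable. -/
noncomputable def pT (f : ℝ × ℝ → ℝ) : ℝ × ℝ → ℝ :=
  fun p => deriv (fun t => f (p.1, t)) p.2

open MeasureTheory

lemma integral_eq_of_divergence_eq_zero {E : Type*} [NormedAddCommGroup E] [NormedSpace ℝ E]
    {flux density : ℝ × ℝ → E} {a b : ℝ}
    (h_flux : Differentiable ℝ flux) (h_density : Differentiable ℝ density)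
    (h_div : ∀ p, fderiv ℝ flux p (1, 0) + fderiv ℝ density p (0, 1) = 0)
    (h_ends : ∀ t, flux (b, t) = flux (a, t)) (t₁ t₂ : ℝ) :
    ∫ x in a..b, density (x, t₁) = ∫ x in a..b, density (x, t₂) := by
  have h := integral2_divergence_prod_of_hasFDerivAt flux density (fderiv ℝ flux)
    (fderiv ℝ density) a t₁ b t₂ h_flux.continuous.continuousOn h_density.continuous.continuousOn
    (fun p _ => (h_flux p).hasFDerivAt) (fun p _ => (h_density p).hasFDerivAt)
    (by simp only [h_div, integrableOn_zero])
  simp only [h_div, h_ends, intervalIntegral.integral_zero, add_sub_cancel_right] at h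
  exact (sub_eq_zero.mp h.symm).symm

section PartialDerivatives

variable {f : ℝ × ℝ → ℝ} {p : ℝ × ℝ}

lemma pX_eq_fderiv (hf : DifferentiableAt ℝ f p) : pX f p = fderiv ℝ f p (1, 0) :=
  (hf.hasFDerivAt.comp_hasDerivAt (f := fun x => (x, p.2)) p.1
    ((hasDerivAt_id p.1).prodMk (hasDerivAt_const p.1 p.2))).deriv

lemma pT_eq_fderiv (hf : DifferentiableAt ℝ f p) : pT f p = fderiv ℝ f p (0, 1) :=
  (hf.hasFDerivAt.comp_hasDerivAt (f := fun t => (p.1, t)) p.2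
    ((hasDerivAt_const p.2 p.1).prodMk (hasDerivAt_id p.2))).deriv

end PartialDerivatives

/-- The Lie derivative `∂ₜ f + Γ ∂ₓ f + k (∂ₓ Γ) f` of a density `f` of weight `k` along the
space-time field `Γ ∂ₓ + ∂ₜ`; its vanishing says that `f` is transported by `Γ`. The first two terms
are encoded as the derivative of `f` in the direction `(Γ p, 1)`. -/
noncomputable def densityLieDeriv (Γ : ℝ × ℝ → ℝ) (k : ℝ) (f : ℝ × ℝ → ℝ) (p : ℝ × ℝ) : ℝ :=
  fderiv ℝ f p (Γ p, 1) + k * fderiv ℝ Γ p (1, 0) * f p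

section DensityLieDeriv

variable {Γ f g : ℝ × ℝ → ℝ} {p : ℝ × ℝ}

lemma densityLieDeriv_add (k : ℝ) (hf : DifferentiableAt ℝ f p) (hg : DifferentiableAt ℝ g p) :
    densityLieDeriv Γ k (fun q => f q + g q) p =
      densityLieDeriv Γ k f p + densityLieDeriv Γ k g p := by
  simp only [densityLieDeriv, fderiv_fun_add hf hg, add_apply]
  ring

lemma densityLieDeriv_mul (j k : ℝ) (hf : DifferentiableAt ℝ f p) (hg : DifferentiableAt ℝ g p) :
    densityLieDeriv Γ (j + k) (fun q => f q * g q) p =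
      densityLieDeriv Γ j f p * g p + f p * densityLieDeriv Γ k g p := by
  simp only [densityLieDeriv, fderiv_fun_mul hf hg, add_apply, smul_apply, smul_eq_mul]
  ring

lemma densityLieDeriv_sqrt (k : ℝ) (hf : DifferentiableAt ℝ f p) (hp : f p ≠ 0) :
    densityLieDeriv Γ (k / 2) (fun q => √(f q)) p = densityLieDeriv Γ k f p / (2 * √(f p)) := by
  simp only [densityLieDeriv, fderiv_sqrt hf hp, smul_apply, smul_eq_mul]
  linear_combination -(k / 2 * fderiv ℝ Γ p (1, 0)) * Real.div_sqrt (x := f p)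

lemma fderiv_mul_add_fderiv_eq_densityLieDeriv_one
    (hΓ : DifferentiableAt ℝ Γ p) (hf : DifferentiableAt ℝ f p) :
    fderiv ℝ (fun q => Γ q * f q) p (1, 0) + fderiv ℝ f p (0, 1) = densityLieDeriv Γ 1 f p := by
  have h_dir : ((Γ p, 1) : ℝ × ℝ) = Γ p • (1, 0) + (0, 1) := by simp
  simp only [densityLieDeriv, h_dir, fderiv_fun_mul hΓ hf, map_add, map_smul, add_apply, smul_apply,
    smul_eq_mul]
  ring

lemma pT_add_pX_mul_eq_densityLieDeriv_one
    (hΓ : DifferentiableAt ℝ Γ p) (hf : DifferentiableAt ℝ f p) :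
    pT f p + pX (fun q => Γ q * f q) p = densityLieDeriv Γ 1 f p := by
  rw [pT_eq_fderiv hf, pX_eq_fderiv (hΓ.fun_mul hf), add_comm,
    fderiv_mul_add_fderiv_eq_densityLieDeriv_one hΓ hf]

end DensityLieDeriv

lemma integral_sqrt_eq_of_densityLieDeriv_two_eq_zero {Γ P : ℝ × ℝ → ℝ} {a b : ℝ}
    (hΓ : Differentiable ℝ Γ) (hP : Differentiable ℝ P) (hP_ne : ∀ p, P p ≠ 0)
    (h_transport : ∀ p, densityLieDeriv Γ 2 P p = 0)
    (h_ends : ∀ t, Γ (b, t) * √(P (b, t)) = Γ (a, t) * √(P (a, t))) (t₁ t₂ : ℝ) :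
    ∫ x in a..b, √(P (x, t₁)) = ∫ x in a..b, √(P (x, t₂)) := by
  have h_sqrt : Differentiable ℝ fun p => √(P p) := hP.sqrt hP_ne
  refine integral_eq_of_divergence_eq_zero (hΓ.fun_mul h_sqrt) h_sqrt (fun p => ?_) h_ends t₁ t₂
  calc fderiv ℝ (fun q => Γ q * √(P q)) p (1, 0) + fderiv ℝ (fun q => √(P q)) p (0, 1)
      = densityLieDeriv Γ 1 (fun q => √(P q)) p :=
        fderiv_mul_add_fderiv_eq_densityLieDeriv_one (hΓ p) (h_sqrt p)
    _ = densityLieDeriv Γ (2 / 2) (fun q => √(P q)) p := by rw [div_self two_ne_zero]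
    _ = 0 := by rw [densityLieDeriv_sqrt 2 (hP p) (hP_ne p), h_transport, zero_div]

lemma densityLieDeriv_two_mul_add_mul {Γ m1 m2 n1 n2 : ℝ × ℝ → ℝ} {p : ℝ × ℝ}
    (hm1 : DifferentiableAt ℝ m1 p) (hm2 : DifferentiableAt ℝ m2 p)
    (hn1 : DifferentiableAt ℝ n1 p) (hn2 : DifferentiableAt ℝ n2 p) :
    densityLieDeriv Γ 2 (fun q => m1 q * n1 q + m2 q * n2 q) p =
      densityLieDeriv Γ 1 m1 p * n1 p + m1 p * densityLieDeriv Γ 1 n1 p +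
        (densityLieDeriv Γ 1 m2 p * n2 p + m2 p * densityLieDeriv Γ 1 n2 p) := by
  rw [densityLieDeriv_add 2 (hm1.fun_mul hn1) (hm2.fun_mul hn2), ← one_add_one_eq_two,
    densityLieDeriv_mul 1 1 hm1 hn1, densityLieDeriv_mul 1 1 hm2 hn2]

theorem stmt_6_general {a b : ℝ} {m1 m2 n1 n2 Γ : ℝ × ℝ → ℝ}
    (hm1 : Differentiable ℝ m1) (hm2 : Differentiable ℝ m2)
    (hn1 : Differentiable ℝ n1) (hn2 : Differentiable ℝ n2) (hΓ : Differentiable ℝ Γ)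
    (hsys : ∀ p : ℝ × ℝ,
        pT m1 p + pX (fun q => Γ q * m1 q) p - n2 p * Γ p = 0 ∧
        pT m2 p + pX (fun q => Γ q * m2 q) p + n1 p * Γ p = 0 ∧
        pT n1 p + pX (fun q => Γ q * n1 q) p + m2 p * Γ p = 0 ∧
        pT n2 p + pX (fun q => Γ q * n2 q) p - m1 p * Γ p = 0)
    (h_ends : ∀ t, Γ (b, t) * √(m1 (b, t) * n1 (b, t) + m2 (b, t) * n2 (b, t)) =
      Γ (a, t) * √(m1 (a, t) * n1 (a, t) + m2 (a, t) * n2 (a, t)))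
    (hpos : ∀ p, 0 < m1 p * n1 p + m2 p * n2 p) (t₁ t₂ : ℝ) :
    ∫ x in a..b, √(m1 (x, t₁) * n1 (x, t₁) + m2 (x, t₁) * n2 (x, t₁)) =
      ∫ x in a..b, √(m1 (x, t₂) * n1 (x, t₂) + m2 (x, t₂) * n2 (x, t₂)) := by
  refine integral_sqrt_eq_of_densityLieDeriv_two_eq_zero (P := fun p => m1 p * n1 p + m2 p * n2 p)
    hΓ ((hm1.fun_mul hn1).fun_add (hm2.fun_mul hn2)) (fun p => (hpos p).ne') (fun p => ?_)
    h_ends t₁ t₂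
  obtain ⟨eq_m1, eq_m2, eq_n1, eq_n2⟩ := hsys p
  rw [pT_add_pX_mul_eq_densityLieDeriv_one (hΓ p) (hm1 p)] at eq_m1
  rw [pT_add_pX_mul_eq_densityLieDeriv_one (hΓ p) (hm2 p)] at eq_m2
  rw [pT_add_pX_mul_eq_densityLieDeriv_one (hΓ p) (hn1 p)] at eq_n1
  rw [pT_add_pX_mul_eq_densityLieDeriv_one (hΓ p) (hn2 p)] at eq_n2
  rw [densityLieDeriv_two_mul_add_mul (hm1 p) (hm2 p) (hn1 p) (hn2 p)]
  linear_combination n1 p * eq_m1 + n2 p * eq_m2 + m1 p * eq_n1 + m2 p * eq_n2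

theorem stmt_6
    (L : ℝ) (hL : 0 < L)
    (m1 m2 n1 n2 Γ : ℝ × ℝ → ℝ)
    (hm1 : ContDiff ℝ (⊤ : ℕ∞) m1) (hm2 : ContDiff ℝ (⊤ : ℕ∞) m2)
    (hn1 : ContDiff ℝ (⊤ : ℕ∞) n1) (hn2 : ContDiff ℝ (⊤ : ℕ∞) n2)
    (hΓ : ContDiff ℝ (⊤ : ℕ∞) Γ)
    (hsys : ∀ p : ℝ × ℝ,
        pT m1 p + pX (fun q => Γ q * m1 q) p - n2 p * Γ p = 0 ∧
        pT m2 p + pX (fun q => Γ q * m2 q) p + n1 p * Γ p = 0 ∧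
        pT n1 p + pX (fun q => Γ q * n1 q) p + m2 p * Γ p = 0 ∧
        pT n2 p + pX (fun q => Γ q * n2 q) p - m1 p * Γ p = 0)
    (hperm1 : ∀ x t : ℝ, m1 (x + L, t) = m1 (x, t))
    (hperm2 : ∀ x t : ℝ, m2 (x + L, t) = m2 (x, t))
    (hpern1 : ∀ x t : ℝ, n1 (x + L, t) = n1 (x, t))
    (hpern2 : ∀ x t : ℝ, n2 (x + L, t) = n2 (x, t))
    (hperΓ : ∀ x t : ℝ, Γ (x + L, t) = Γ (x, t))
    (hpos : ∀ p : ℝ × ℝ, 0 < m1 p * n1 p + m2 p * n2 p) :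
    ∀ t1 t2 : ℝ,
      (∫ x in (0:ℝ)..L,
          Real.sqrt (m1 (x, t1) * n1 (x, t1) + m2 (x, t1) * n2 (x, t1)))
        = ∫ x in (0:ℝ)..L,
            Real.sqrt (m1 (x, t2) * n1 (x, t2) + m2 (x, t2) * n2 (x, t2)) := by
  refine stmt_6_general (hm1.differentiable (by simp)) (hm2.differentiable (by simp))
    (hn1.differentiable (by simp)) (hn2.differentiable (by simp)) (hΓ.differentiable (by simp))
    hsys (fun t => ?_) hpos
  rw [← zero_add L, hperm1, hperm2, hpern1, hpern2, hperΓ]
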